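/- arXiv:1709.03268 — 2 statements merged into one kernel-verified Lean document; each statement's English description precedes it below -/
import Mathlib

section
/- Let M and N be finitely generated R-modules and a, b ideals with aM ≠ M, bM ≠ M, aN ≠ N, bN ≠ N. Then a ∼_{(0; M ⊕ N)} b (i.e., 0 :_{M⊕N} a = b(M⊕N) and 0 :_{M⊕N} b = a(M⊕N)) if and only if a ∼_{(0;M)} b and a ∼_{(0;N)} b. -/
open RingTheory.Sequence

/-- The colon submodule `N :_M a = {m ∈ M | a m ⊆ N}`. -/
def Submodule.colonBy {R M : Type*} [CommRing R] [AddCommGroup M] [Module R M]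
    (N : Submodule R M) (a : Ideal R) : Submodule R M :=
  ⨅ r ∈ a, N.comap (LinearMap.lsmul R M r)

open Submodule

section Semiring

variable {R M N : Type*} [Semiring R] [AddCommMonoid M] [Module R M] [AddCommMonoid N] [Module R N]

theorem submodule_prod_inj {p p' : Submodule R M} {q q' : Submodule R N} :
    p.prod q = p'.prod q' ↔ p = p' ∧ q = q' := by
  refine ⟨fun h => ⟨?_, ?_⟩, fun ⟨hp, hq⟩ => hp ▸ hq ▸ rfl⟩
  · simpa only [prod_comap_inl] using congrArg (comap (LinearMap.inl R M N)) h
  · simpa only [prod_comap_inr] using congrArg (comap (LinearMap.inr R M N)) h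

theorem ideal_smul_submodule_prod (a : Ideal R) (p : Submodule R M) (q : Submodule R N) :
    a • p.prod q = (a • p).prod (a • q) := by
  simp only [LinearMap.prod_eq_sup_map, smul_sup, map_smul'']

end Semiring

section CommRing

variable {R M N : Type*} [CommRing R] [AddCommGroup M] [Module R M] [AddCommGroup N] [Module R N]

theorem mem_colonBy {p : Submodule R M} {a : Ideal R} {m : M} :
    m ∈ p.colonBy a ↔ ∀ r ∈ a, r • m ∈ p := by
  simp only [colonBy, mem_iInf, mem_comap, LinearMap.lsmul_apply]

theorem colonBy_prod (p : Submodule R M) (q : Submodule R N) (a : Ideal R) :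
    (p.prod q).colonBy a = (p.colonBy a).prod (q.colonBy a) := by
  ext ⟨m, n⟩
  simp only [mem_colonBy, mem_prod, Prod.smul_mk, ← forall_and]

theorem colonBy_prod_eq_smul_prod_iff {p p' : Submodule R M} {q q' : Submodule R N}
    {a b : Ideal R} :
    (p.prod q).colonBy a = b • p'.prod q' ↔ p.colonBy a = b • p' ∧ q.colonBy a = b • q' := by
  rw [colonBy_prod, ideal_smul_submodule_prod, submodule_prod_inj]

/-- For `p = I • ⊤` and `q = I • ⊤`, the two equations are those of linkage by an ideal `I`. -/
theorem linked_prod_iff_general (p : Submodule R M) (q : Submodule R N) (a b : Ideal R) :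
    ((p.prod q).colonBy a = b • ⊤ ∧ (p.prod q).colonBy b = a • ⊤) ↔
      ((p.colonBy a = b • ⊤ ∧ p.colonBy b = a • ⊤) ∧
        (q.colonBy a = b • ⊤ ∧ q.colonBy b = a • ⊤)) := by
  rw [← prod_top, colonBy_prod_eq_smul_prod_iff, colonBy_prod_eq_smul_prod_iff, and_and_and_comm]

end CommRing

/-- `a ∼_{(0; M ⊕ N)} b` iff `a ∼_{(0;M)} b` and `a ∼_{(0;N)} b`. -/
theorem linked_prod_iff {R M N : Type*} [CommRing R] [IsNoetherianRing R]
    [AddCommGroup M] [Module R M] [Module.Finite R M]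
    [AddCommGroup N] [Module R N] [Module.Finite R N]
    (a b : Ideal R)
    (haM : a • (⊤ : Submodule R M) ≠ ⊤) (hbM : b • (⊤ : Submodule R M) ≠ ⊤)
    (haN : a • (⊤ : Submodule R N) ≠ ⊤) (hbN : b • (⊤ : Submodule R N) ≠ ⊤) :
    ((⊥ : Submodule R (M × N)).colonBy a = b • ⊤ ∧
        (⊥ : Submodule R (M × N)).colonBy b = a • ⊤) ↔
      (((⊥ : Submodule R M).colonBy a = b • ⊤ ∧ (⊥ : Submodule R M).colonBy b = a • ⊤) ∧
        ((⊥ : Submodule R N).colonBy a = b • ⊤ ∧ (⊥ : Submodule R N).colonBy b = a • ⊤)) := by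
  simpa only [prod_bot] using linked_prod_iff_general (⊥ : Submodule R M) (⊥ : Submodule R N) a b
end

section
/- Suppose a and b are linked by I over M and every associated prime of M/IM is minimal in Ass(M/IM). Then Ass(M/IM) = Ass(M/aM) ∪ Ass(M/bM) and Ass(M/aM) = Ass(M/IM) ∩ V(a). -/
open RingTheory.Sequence

/-- `a` and `b` are linked by `I` over `M`: `I ⊆ a ∩ b` is generated by an `M`-regular
sequence, `aM ≠ M ≠ bM`, `IM :_M a = bM` and `IM :_M b = aM`. -/
def Ideal.LinkedBy (R M : Type*) [CommRing R] [AddCommGroup M] [Module R M]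
    (a b I : Ideal R) : Prop :=
  I ≤ a ⊓ b ∧
  (∃ rs : List R, I = Ideal.ofList rs ∧ RingTheory.Sequence.IsRegular M rs) ∧
  a • (⊤ : Submodule R M) ≠ ⊤ ∧ b • (⊤ : Submodule R M) ≠ ⊤ ∧
  (I • ⊤ : Submodule R M).colonBy a = b • (⊤ : Submodule R M) ∧
  (I • ⊤ : Submodule R M).colonBy b = a • (⊤ : Submodule R M)

/-!
Suppose `N :_M a = bM`, and let `p = N : x` be a minimal associated prime of `M/N`.

If `a ⊈ p`, then an element of `a` outside `p` shows that `(N :_M a) : x` is still `p`, so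
`p ∈ Ass(M/bM)`. If `a ⊆ p`, then `x ∈ N :_M a = bM`, so `x` is a combination of elements `r m`
with `r ∈ b`. As no multiple of `x` by an element outside `p` lies in `N`, some `m` satisfies
`(N :_M b) : m ⊆ p`. A prime minimal over this ideal and contained in `p` is associated to
`M/(N :_M b)`, hence to `M/N`, hence equal to `p`.
-/

section AssociatedPrimes

variable {R M : Type*} [CommRing R] [AddCommGroup M] [Module R M]
  {N : Submodule R M} {a b p : Ideal R}

theorem associatedPrimes_quotient (N : Submodule R M) :
    associatedPrimes R (M ⧸ N) = N.associatedPrimes := by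
  ext p
  have colon_mkQ (x : M) : (⊥ : Submodule R (M ⧸ N)).colon {N.mkQ x} = N.colon {x} := by
    ext r
    rw [Submodule.mem_colon_singleton, Submodule.mem_colon_singleton, Submodule.mem_bot,
      ← map_smul, Submodule.mkQ_apply, Submodule.Quotient.mk_eq_zero]
  rw [AssociatedPrimes.mem_iff, IsAssociatedPrime, Submodule.AssociatePrimes.mem_iff,
    Submodule.isAssociatedPrime_def, Submodule.isAssociatedPrime_def, N.mkQ_surjective.exists]
  simp only [colon_mkQ]

theorem le_of_mem_associatedPrimes (h : a • ⊤ ≤ N) (hp : p ∈ N.associatedPrimes) : a ≤ p := by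
  obtain ⟨-, x, rfl⟩ := hp
  exact fun r hr ↦ Ideal.le_radical
    (Submodule.mem_colon_singleton.2 (h (Submodule.smul_mem_smul hr trivial)))

theorem mem_colonBy_s9 {x : M} : x ∈ N.colonBy a ↔ ∀ r ∈ a, r • x ∈ N := by
  simp only [Submodule.colonBy, Submodule.mem_iInf, Submodule.mem_comap, LinearMap.lsmul_apply]

theorem mem_colonBy_iff_le_colon {x : M} : x ∈ N.colonBy a ↔ a ≤ N.colon {x} := by
  simp only [mem_colonBy_s9, SetLike.le_def, Submodule.mem_colon_singleton]

theorem le_colonBy (N : Submodule R M) (a : Ideal R) : N ≤ N.colonBy a :=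
  fun _ hx ↦ mem_colonBy_s9.2 fun r _ ↦ N.smul_mem r hx

theorem smul_top_le_colonBy_comm : a • ⊤ ≤ N.colonBy b ↔ b • ⊤ ≤ N.colonBy a := by
  simp only [Submodule.smul_le, mem_colonBy_s9, Submodule.mem_top, forall_const]
  refine ⟨fun h s hs m r hr ↦ ?_, fun h r hr m s hs ↦ ?_⟩ <;> rw [smul_comm]
  exacts [h r hr m s hs, h s hs m r hr]

theorem colonBy_span_colon_singleton (s : Finset R) (x : M) :
    (N.colonBy (Ideal.span s)).colon {x} = s.inf fun r ↦ N.colon {r • x} := by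
  ext t
  simp only [Submodule.mem_colon_singleton, mem_colonBy_iff_le_colon, Ideal.span_le,
    Submodule.mem_finsetInf, Set.subset_def, SetLike.mem_coe, smul_comm t]

theorem associatedPrimes_colonBy_subset (N : Submodule R M) (hb : b.FG) :
    (N.colonBy b).associatedPrimes ⊆ N.associatedPrimes := by
  obtain ⟨s, rfl⟩ := hb
  rintro _ ⟨hp, x, rfl⟩
  rw [colonBy_span_colon_singleton, ← Ideal.radicalInfTopHom_apply, map_finset_inf] at hp ⊢
  obtain ⟨r, -, hr⟩ := Ideal.eq_inf_of_isPrime_inf hp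
  exact ⟨hp, r • x, hr.symm⟩

theorem mem_associatedPrimes_colonBy_of_not_le (hp : p ∈ N.associatedPrimes) (hb : ¬b ≤ p) :
    p ∈ (N.colonBy b).associatedPrimes := by
  obtain ⟨hprime, x, hx⟩ := hp
  obtain ⟨r, hr, hrp⟩ := SetLike.not_le_iff_exists.1 hb
  have colon_le : (N.colonBy b).colon {x} ≤ p := fun t ht ↦ by
    have hrt : r * t ∈ N.colon {x} := by
      rw [Submodule.mem_colon_singleton] at ht ⊢
      rw [mul_smul]
      exact mem_colonBy_s9.1 ht r hr
    exact (hprime.mem_or_mem (hx ▸ Ideal.le_radical hrt)).resolve_left hrp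
  refine ⟨hprime, x, le_antisymm ?_ (hprime.radical_le_iff.2 colon_le)⟩
  exact hx.trans_le (Ideal.radical_mono (Submodule.colon_mono (le_colonBy N b) subset_rfl))

theorem exists_colonBy_colon_le_of_mem_smul_top [hp : p.IsPrime] {x : M}
    (hx : x ∈ b • (⊤ : Submodule R M)) (hxp : N.colon {x} ≤ p) :
    ∃ m : M, (N.colonBy b).colon {m} ≤ p := by
  contrapose! hxp
  suffices ∃ s ∉ p, s • x ∈ N by
    obtain ⟨s, hs, hsx⟩ := this
    exact fun hle ↦ hs (hle (Submodule.mem_colon_singleton.2 hsx))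
  induction hx using Submodule.smul_induction_on' with
  | smul r hr m _ =>
    obtain ⟨s, hsm, hs⟩ := SetLike.not_le_iff_exists.1 (hxp m)
    refine ⟨s, hs, ?_⟩
    rw [smul_comm]
    exact mem_colonBy_s9.1 (Submodule.mem_colon_singleton.1 hsm) r hr
  | add x _ y _ ihx ihy =>
    obtain ⟨s, hs, hsx⟩ := ihx
    obtain ⟨t, ht, hty⟩ := ihy
    refine ⟨s * t, hp.mul_notMem hs ht, ?_⟩
    rw [smul_add, mul_smul, mul_smul, smul_comm s t x]
    exact N.add_mem (N.smul_mem t hsx) (N.smul_mem s hty)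

theorem exists_mem_associatedPrimes_le [IsNoetherianRing R] [p.IsPrime] {x : M}
    (hx : N.colon {x} ≤ p) : ∃ q ∈ N.associatedPrimes, q ≤ p := by
  obtain ⟨q, hq, hqp⟩ := Ideal.exists_minimalPrimes_le hx
  exact ⟨q, Submodule.isAssociatedPrime_iff.2
    ⟨hq.isPrime, Submodule.exists_eq_colon_of_mem_minimalPrimes hq⟩, hqp⟩

theorem mem_associatedPrimes_colonBy_of_minimal [IsNoetherianRing R]
    (h : N.colonBy a ≤ b • ⊤) (hp : Minimal (· ∈ N.associatedPrimes) p) (ha : a ≤ p) :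
    p ∈ (N.colonBy b).associatedPrimes := by
  obtain ⟨hprime, x, hx⟩ := Submodule.isAssociatedPrime_iff.1 hp.prop
  have hxb : x ∈ b • (⊤ : Submodule R M) := h (mem_colonBy_iff_le_colon.2 (hx ▸ ha))
  obtain ⟨m, hm⟩ := exists_colonBy_colon_le_of_mem_smul_top hxb hx.ge
  obtain ⟨q, hq, hqp⟩ := exists_mem_associatedPrimes_le hm
  have hqN : q ∈ N.associatedPrimes :=
    associatedPrimes_colonBy_subset N (IsNoetherian.noetherian b) hq
  exact hp.eq_of_le hqN hqp ▸ hq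

theorem ass_eq_of_linked_general [IsNoetherianRing R] (h : N.colonBy a = b • ⊤)
    (hmin : ∀ p ∈ associatedPrimes R (M ⧸ N), ∀ q ∈ associatedPrimes R (M ⧸ N), q ≤ p → q = p) :
    associatedPrimes R (M ⧸ N) =
        associatedPrimes R (M ⧸ N.colonBy b) ∪
          associatedPrimes R (M ⧸ (b • ⊤ : Submodule R M)) ∧
      associatedPrimes R (M ⧸ N.colonBy b) =
        associatedPrimes R (M ⧸ N) ∩ {p : Ideal R | a ≤ p} := by
  rw [← h]
  simp only [associatedPrimes_quotient] at hmin ⊢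
  have subset (c : Ideal R) : (N.colonBy c).associatedPrimes ⊆ N.associatedPrimes :=
    associatedPrimes_colonBy_subset N (IsNoetherian.noetherian c)
  have mem_of_le {p : Ideal R} (hp : p ∈ N.associatedPrimes) (hap : a ≤ p) :
      p ∈ (N.colonBy b).associatedPrimes :=
    mem_associatedPrimes_colonBy_of_minimal h.le
      ⟨hp, fun q hq hqp ↦ (hmin p hp q hq hqp).ge⟩ hap
  refine ⟨Set.Subset.antisymm (fun p hp ↦ ?_) (Set.union_subset (subset b) (subset a)),
    Set.Subset.antisymm (fun p hp ↦ ⟨subset b hp, ?_⟩) fun p hp ↦ mem_of_le hp.1 hp.2⟩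
  · by_cases hap : a ≤ p
    · exact .inl (mem_of_le hp hap)
    · exact .inr (mem_associatedPrimes_colonBy_of_not_le hp hap)
  · exact le_of_mem_associatedPrimes (smul_top_le_colonBy_comm.2 h.ge) hp

end AssociatedPrimes

/-- If `a` and `b` are linked by `I` over `M` and every associated prime of `M/IM`
is minimal, then `Ass(M/IM) = Ass(M/aM) ∪ Ass(M/bM)` and
`Ass(M/aM) = Ass(M/IM) ∩ V(a)`. -/
theorem ass_eq_of_linked {R M : Type*} [CommRing R] [IsNoetherianRing R]
    [AddCommGroup M] [Module R M] [Module.Finite R M]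
    (a b I : Ideal R) (h : Ideal.LinkedBy R M a b I)
    (hmin : ∀ p ∈ associatedPrimes R (M ⧸ (I • ⊤ : Submodule R M)),
      ∀ q ∈ associatedPrimes R (M ⧸ (I • ⊤ : Submodule R M)), q ≤ p → q = p) :
    associatedPrimes R (M ⧸ (I • ⊤ : Submodule R M)) =
        associatedPrimes R (M ⧸ (a • ⊤ : Submodule R M)) ∪
          associatedPrimes R (M ⧸ (b • ⊤ : Submodule R M)) ∧
      associatedPrimes R (M ⧸ (a • ⊤ : Submodule R M)) =
        associatedPrimes R (M ⧸ (I • ⊤ : Submodule R M)) ∩ {p : Ideal R | a ≤ p} := by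
  obtain ⟨-, -, -, -, hb, ha⟩ := h
  exact ha ▸ ass_eq_of_linked_general hb hmin
end
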